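/- arXiv:2201.10404 — 3 statements merged into one kernel-verified Lean document; each statement's English description precedes it below -/
import Mathlib

section
/- Let E be a finite set of size m and let r : 2^E → ℤ≥0 be a function satisfying r(S) ≤ min(r(E), |S|) for every S ⊆ E. Define the Tutte polynomial T_M(x,y) = ∑_{S ⊆ E} (x-1)^{r(E)-r(S)} (y-1)^{|S|-r(S)} with coefficients t_{ij} given by T_M(x,y) = ∑_{i,j} t_{ij} x^i y^j. Then for every integer h with 0 ≤ h < m, the linear relation ∑_{i=0}^{h} ∑_{j=0}^{h-i} binom(h-i, j) (-1)^j t_{ij} = 0 holds (Brylawski's identities for ranked sets). -/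
/-!
The functional `x^i y^j ↦ C(h-i, j) (-1)^j` (zero for `i > h`) is the coefficient of `w^h` in
`w^i (-w/(1-w))^j / (1-w)`. So the left-hand side is the coefficient of `w^h` in
`T(w, -w/(1-w)) / (1-w)`, a power series in `w` (`coeff_tutteSubst`).
The substitution `x = w`, `y = -w/(1-w)` parametrizes the hyperbola `(x-1)(y-1) = 1`. On it the
term of `S` becomes `(x-1)^{r(E)} (y-1)^{|S|}`, whatever `r(S)` is, and summing over `S` by the
binomial theorem gives `(x-1)^{r(E)} y^m`, which is divisible by `w^m`
(`X_pow_dvd_tutteSubst`). Hence all coefficients below `w^m` vanish.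
-/

open Polynomial Finset

/-- The geometric series `1/(1-w)`. -/
noncomputable def geomSeries : PowerSeries ℤ := PowerSeries.mk 1

lemma geomSeries_mul : geomSeries * (1 - PowerSeries.X) = 1 :=
  PowerSeries.mk_one_mul_one_sub_eq_one ℤ

/-- The substitution `x ↦ w`, `y ↦ -w/(1-w)` from `ℤ[x][y]` to `ℤ⟦w⟧`. -/
noncomputable def tutteSubst : Polynomial (Polynomial ℤ) →+* PowerSeries ℤ :=
  Polynomial.eval₂RingHom
    (Polynomial.eval₂RingHom (Int.castRingHom (PowerSeries ℤ)) PowerSeries.X)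
    (-(PowerSeries.X * geomSeries))

/-- The Brylawski sum of any polynomial is a coefficient of its substituted power series; by
linearity this only has to be checked on monomials. -/
lemma coeff_tutteSubst (h : ℕ) (P : Polynomial (Polynomial ℤ)) :
    ∑ i ∈ Finset.range (h + 1), ∑ j ∈ Finset.range (h - i + 1),
      ((h - i).choose j : ℤ) * (-1 : ℤ) ^ j * (P.coeff j).coeff i =
    PowerSeries.coeff h (geomSeries * tutteSubst P) := by
  induction P using Polynomial.induction_on' with
  | add p q hp hq =>
    simp only [Polynomial.coeff_add, mul_add, Finset.sum_add_distrib, map_add, hp, hq]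
  | monomial n q =>
    induction q using Polynomial.induction_on' with
    | add p q hp hq =>
      simp only [map_add, Polynomial.coeff_add, mul_add, Finset.sum_add_distrib, hp, hq]
    | monomial k a =>
      have e : geomSeries * tutteSubst (monomial n (monomial k a)) =
          PowerSeries.C (a * (-1) ^ n) * (PowerSeries.X ^ (k + n) * geomSeries ^ (n + 1)) := by
        simp only [tutteSubst, coe_eval₂RingHom, eval₂_monomial, map_mul, map_pow, map_neg,
          map_one, eq_intCast]
        rw [neg_pow, mul_pow]
        ring
      rw [e, PowerSeries.coeff_C_mul, PowerSeries.coeff_X_pow_mul', geomSeries,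
        PowerSeries.mk_one_pow_eq_mk_choose_add]
      have e2 : ∀ i j : ℕ, ((monomial n (monomial k a)).coeff j).coeff i =
          if n = j then (if k = i then a else 0) else 0 := by
        intro i j
        rw [Polynomial.coeff_monomial]
        split_ifs <;> simp_all [Polynomial.coeff_monomial]
      simp only [e2, mul_ite, mul_zero, Finset.sum_ite_eq, Finset.mem_range]
      have e3 : ∀ i : ℕ, (if n < h - i + 1 then
            (if k = i then ((h - i).choose n : ℤ) * (-1) ^ n * a else 0) else 0) =
          if k = i then
            (if n < h - i + 1 then ((h - i).choose n : ℤ) * (-1) ^ n * a else 0) else 0 := by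
        intro i; split_ifs <;> rfl
      simp only [e3, Finset.sum_ite_eq, Finset.mem_range, PowerSeries.coeff_mk]
      by_cases hk : k + n ≤ h
      · have h3 : n + (h - (k + n)) = h - k := by omega
        rw [if_pos (by omega), if_pos (by omega), if_pos hk, h3]
        ring
      · rw [if_neg hk]
        split_ifs
        · omega
        · rfl
        · rfl

lemma X_pow_dvd_tutteSubst {E : Type*} [Fintype E] [DecidableEq E]
    (r : Finset E → ℕ)
    (hr : ∀ S : Finset E, r S ≤ min (r Finset.univ) S.card) :
    (PowerSeries.X : PowerSeries ℤ) ^ Fintype.card E ∣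
      tutteSubst (∑ S : Finset E,
        (Polynomial.C Polynomial.X - 1) ^ (r Finset.univ - r S) *
          (Polynomial.X - 1) ^ (S.card - r S)) := by
  have hx : tutteSubst (Polynomial.C Polynomial.X) = PowerSeries.X := by simp [tutteSubst]
  have hy : tutteSubst Polynomial.X = -(PowerSeries.X * geomSeries) := by simp [tutteSubst]
  -- `(x-1)(y-1) = 1` on the curve, so both exponents can be raised by `r S`.
  have hpq : (PowerSeries.X - 1) * (-(PowerSeries.X * geomSeries) - 1) = (1 : PowerSeries ℤ) := by
    linear_combination PowerSeries.X * geomSeries_mul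
  have key : ∀ S : Finset E,
      tutteSubst ((Polynomial.C Polynomial.X - 1) ^ (r Finset.univ - r S) *
          (Polynomial.X - 1) ^ (S.card - r S)) =
        (PowerSeries.X - 1) ^ r Finset.univ *
          (-(PowerSeries.X * geomSeries) - 1) ^ S.card := by
    intro S
    obtain ⟨h1, h2⟩ := le_min_iff.1 (hr S)
    rw [map_mul, map_pow, map_pow, map_sub, map_sub, map_one, hx, hy]
    conv_rhs => rw [← Nat.sub_add_cancel h1, ← Nat.sub_add_cancel h2, pow_add, pow_add,
      mul_mul_mul_comm, ← mul_pow, hpq, one_pow, mul_one]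
  have hb := Fintype.sum_pow_mul_eq_add_pow E
    (-(PowerSeries.X * geomSeries) - 1) (1 : PowerSeries ℤ)
  simp only [one_pow, mul_one, sub_add_cancel] at hb
  rw [map_sum, Finset.sum_congr rfl fun S _ => key S, ← Finset.mul_sum, hb]
  exact Dvd.dvd.mul_left (pow_dvd_pow_of_dvd (Dvd.dvd.neg_right (dvd_mul_right _ _)) _) _

/-- Brylawski's identities for a ranked set `M = (E, r)`: for `0 ≤ h < |E|`,
`∑_{i=0}^{h} ∑_{j=0}^{h-i} C(h-i, j) (-1)^j t_{ij} = 0`.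
The Tutte polynomial is an element of `ℤ[x][y]`, where `x` is
`Polynomial.C Polynomial.X` and `y` is `Polynomial.X`, so the coefficient
`t i j` of `x^i y^j` is `(T.coeff j).coeff i`. -/
theorem brylawski_ranked_set {E : Type*} [Fintype E] [DecidableEq E]
    (r : Finset E → ℕ)
    (hr : ∀ S : Finset E, r S ≤ min (r Finset.univ) S.card)
    (T : Polynomial (Polynomial ℤ))
    (hT : T = ∑ S : Finset E,
      (Polynomial.C Polynomial.X - 1) ^ (r Finset.univ - r S) *
        (Polynomial.X - 1) ^ (S.card - r S))
    (t : ℕ → ℕ → ℤ)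
    (ht : ∀ i j, t i j = (T.coeff j).coeff i)
    (h : ℕ) (hhm : h < Fintype.card E) :
    ∑ i ∈ Finset.range (h + 1), ∑ j ∈ Finset.range (h - i + 1),
      ((h - i).choose j : ℤ) * (-1 : ℤ) ^ j * t i j = 0 := by
  simp only [ht]
  rw [coeff_tutteSubst, hT]
  exact PowerSeries.X_pow_dvd_iff.1 (Dvd.dvd.mul_left (X_pow_dvd_tutteSubst r hr) _) h hhm
end

section
/- Let E be a finite set with |E| ≥ 3 and let r : 2^E → ℤ≥0 satisfy r(S) ≤ min(r(E), |S|) for every S ⊆ E. Writing the Tutte polynomial T_M(x,y) = ∑_{S ⊆ E} (x-1)^{r(E)-r(S)} (y-1)^{|S|-r(S)} as ∑_{i,j} t_{ij} x^i y^j, we have t_{20} - t_{11} + t_{02} = t_{10}. -/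
/-!
Each subset `S` contributes `(x - 1) ^ a * (y - 1) ^ b` to the Tutte polynomial, where
`a = r(E) - r(S)` and `b = |S| - r(S)`. Its contribution to `t₂₀ - t₁₁ + t₀₂ - t₁₀` is
`(-1) ^ (a + b) * (a.choose 2 - a * b + b.choose 2 + a)`, and this equals
`(-1) ^ (a + b) * d * (d + 1) / 2` with `d = a - b = r(E) - |S|`. The value `r(S)` has cancelled,
so the total is an alternating binomial sum, over `k = |S|`, of a polynomial of degree two in `k`.
Such a sum is a `|E|`-th finite difference, and it vanishes because `|E| ≥ 3`
(`alternating_sum_eq_zero`).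
-/

open Polynomial Finset

lemma coeff_zero_X_sub_one_pow (a : ℕ) : (((X : ℤ[X]) - 1) ^ a).coeff 0 = (-1) ^ a := by
  simp [coeff_zero_eq_eval_zero]

lemma coeff_one_X_sub_one_pow (a : ℕ) :
    (((X : ℤ[X]) - 1) ^ a).coeff 1 = -((-1) ^ a * a) := by
  induction a with
  | zero => simp [coeff_one]
  | succ a ih =>
    rw [pow_succ, mul_sub, mul_one, coeff_sub, coeff_mul_X, ih, coeff_zero_X_sub_one_pow]
    push_cast
    ring

lemma two_mul_coeff_two_X_sub_one_pow (a : ℕ) :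
    2 * (((X : ℤ[X]) - 1) ^ a).coeff 2 = (-1) ^ a * (a * (a - 1)) := by
  induction a with
  | zero => simp [coeff_one]
  | succ a ih =>
    rw [pow_succ, mul_sub, mul_one, coeff_sub, coeff_mul_X, mul_sub, ih, coeff_one_X_sub_one_pow]
    push_cast
    ring

/-- The coefficients of `(x - 1) ^ a * (y - 1) ^ b` separate into a factor for `x` and one
for `y`. -/
lemma coeff_coeff_term (a b i j : ℕ) :
    (((C X - 1 : ℤ[X][X]) ^ a * (X - 1) ^ b).coeff j).coeff i =
      (((X : ℤ[X]) - 1) ^ a).coeff i * (((X : ℤ[X]) - 1) ^ b).coeff j := by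
  have h₁ : (C X - 1 : ℤ[X][X]) ^ a = C ((X - 1) ^ a) := by simp
  have h₂ : (X - 1 : ℤ[X][X]) ^ b = ((X - 1 : ℤ[X]) ^ b).map C := by simp
  rw [h₁, h₂, coeff_C_mul, coeff_map, coeff_mul_C]

/-- The alternating sum over all subsets `S` of a quadratic polynomial in `|S|` vanishes: grouping
the subsets by size turns it into an `|E|`-th forward difference, which kills polynomials of degree
below `|E|`. -/
lemma alternating_sum_eq_zero {E : Type*} [Fintype E] [DecidableEq E]
    (hE : 3 ≤ Fintype.card E) (R : ℤ) :
    ∑ S : Finset E, (-1 : ℤ) ^ S.card * ((R - S.card) * (R - S.card + 1)) = 0 := by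
  set n := Fintype.card E with hn
  set P : ℤ[X] := (C R - X) * (C R - X + 1) with hP
  have hdeg : P.natDegree < n := by
    have : P.natDegree ≤ 2 := by
      rw [hP]
      compute_degree
    omega
  have hdiff := congrFun (Polynomial.fwdDiff_iter_eq_zero_of_degree_lt hdeg) (0 : ℤ)
  rw [fwdDiff_iter_eq_sum_shift] at hdiff
  rw [← Finset.powerset_univ,
    Finset.sum_powerset_apply_card
      (fun k : ℕ => (-1 : ℤ) ^ k * ((R - k) * (R - k + 1))), Finset.card_univ, ← hn]
  -- The forward difference carries the sign `(-1) ^ (n - k)` rather than `(-1) ^ k`.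
  have hsum := congrArg (fun z : ℤ => (-1) ^ n * z) hdiff
  simp only [Pi.zero_apply, mul_zero, Finset.mul_sum] at hsum
  rw [← hsum]
  refine Finset.sum_congr rfl fun k hk => ?_
  have hkn : k ≤ n := Nat.lt_succ_iff.mp (Finset.mem_range.mp hk)
  have hsign : (-1 : ℤ) ^ n * (-1) ^ (n - k) = (-1) ^ k := by
    rw [← pow_add, show n + (n - k) = 2 * (n - k) + k by omega, pow_add, pow_mul]
    simp
  rw [← hsign]
  simp [hP]
  ring

/-- If `|E| ≥ 3`, then `t₂₀ - t₁₁ + t₀₂ = t₁₀` for the Tutte polynomial of a ranked set.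
The Tutte polynomial is an element of `ℤ[x][y]`, where `x` is
`Polynomial.C Polynomial.X` and `y` is `Polynomial.X`, so the coefficient
`t i j` of `x^i y^j` is `(T.coeff j).coeff i`. -/
theorem tutte_third_relation {E : Type*} [Fintype E] [DecidableEq E]
    (hE : 3 ≤ Fintype.card E)
    (r : Finset E → ℕ)
    (hr : ∀ S : Finset E, r S ≤ min (r Finset.univ) S.card)
    (T : Polynomial (Polynomial ℤ))
    (hT : T = ∑ S : Finset E,
      (Polynomial.C Polynomial.X - 1) ^ (r Finset.univ - r S) *
        (Polynomial.X - 1) ^ (S.card - r S))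
    (t : ℕ → ℕ → ℤ)
    (ht : ∀ i j, t i j = (T.coeff j).coeff i) :
    t 2 0 - t 1 1 + t 0 2 = t 1 0 := by
  have ht' : ∀ i j, t i j = ∑ S : Finset E,
      (((X : ℤ[X]) - 1) ^ (r Finset.univ - r S)).coeff i *
        (((X : ℤ[X]) - 1) ^ (S.card - r S)).coeff j := by
    intro i j
    rw [ht, hT, finsetSum_coeff, finsetSum_coeff]
    exact Finset.sum_congr rfl fun S _ => coeff_coeff_term _ _ _ _
  have key : 2 * (t 2 0 - t 1 1 + t 0 2 - t 1 0) = (-1) ^ r Finset.univ *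
      ∑ S : Finset E, (-1 : ℤ) ^ S.card *
        (((r Finset.univ : ℤ) - S.card) * ((r Finset.univ : ℤ) - S.card + 1)) := by
    simp only [ht', ← Finset.sum_sub_distrib, ← Finset.sum_add_distrib, Finset.mul_sum]
    refine Finset.sum_congr rfl fun S _ => ?_
    obtain ⟨h₁, h₂⟩ := le_min_iff.mp (hr S)
    obtain ⟨a, ha⟩ := Nat.exists_eq_add_of_le h₁
    obtain ⟨b, hb⟩ := Nat.exists_eq_add_of_le h₂
    rw [ha, hb, Nat.add_sub_cancel_left, Nat.add_sub_cancel_left]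
    simp only [coeff_zero_X_sub_one_pow, coeff_one_X_sub_one_pow]
    have hsq : (-1 : ℤ) ^ r S * (-1) ^ r S = 1 := by
      rw [← mul_pow]
      simp
    push_cast
    rw [pow_add, pow_add]
    linear_combination (-1 : ℤ) ^ b * two_mul_coeff_two_X_sub_one_pow a +
      (-1 : ℤ) ^ a * two_mul_coeff_two_X_sub_one_pow b -
      (-1 : ℤ) ^ a * (-1) ^ b * ((a - b : ℤ) * (a - b + 1)) * hsq
  rw [alternating_sum_eq_zero hE, mul_zero] at key
  linarith
end

section
/- Let G be a finite simple graph with n vertices, m edges and c connected components. Define the Tutte polynomial of G by T_G(x,y) = ∑_{A ⊆ E(G)} (x-1)^{k(A)-c} (y-1)^{k(A)+|A|-n}, where k(A) is the number of connected components of the spanning subgraph (V(G), A), and write T_G(x,y) = ∑_{i,j} t_{ij} x^i y^j. Then for every integer h with 0 ≤ h < m, the linear relation ∑_{i=0}^{h} ∑_{j=0}^{h-i} binom(h-i, j) (-1)^j t_{ij} = 0 holds (Brylawski's identities for graphs). -/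
/-!
The double sum is the coefficient of `z ^ h` in the power series `T(z, -z / (1 - z)) / (1 - z)`:
the monomial `x ^ i * y ^ j` contributes `z ^ i * (-1) ^ j * z ^ j / (1 - z) ^ (j + 1)`, and the
coefficient of `z ^ r` in `z ^ j / (1 - z) ^ (j + 1)` is `r.choose j`
(`coeff_eq_brylawski_sum`).

The curve `x = z`, `y = -z / (1 - z)` is the hyperbola `(x - 1) * (y - 1) = 1`. On it, the term of
`T` indexed by `A` collapses to `(x - 1) ^ (n - c) * (y - 1) ^ #A`, so that
`T = (x - 1) ^ (n - c) * y ^ m` by the binomial theorem, and this is divisible by `z ^ m`. Hence the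
coefficients of `z ^ h` with `h < m` vanish.

The exponents of `T` are truncated subtractions, so the collapse needs `c ≤ k A` and
`n ≤ k A + #A` (`card_le_card_connectedComponent_add_card`): adding an edge
to a graph merges at most two components.
-/

open Polynomial Finset

/-! ### Components of spanning subgraphs -/

/-- Adding the edge `uv` to a graph `H` only creates connections between the component of `u` and
that of `v`. -/
lemma reachable_or_of_reachable_insert {V : Type*} {H H' : SimpleGraph V} {u v : V}
    (hH : ∀ a b, H'.Adj a b → H.Adj a b ∨ s(a, b) = s(u, v)) {a b : V}
    (hab : H'.Reachable a b) :
    H.Reachable a b ∨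
      ((H.Reachable a u ∨ H.Reachable a v) ∧ (H.Reachable b u ∨ H.Reachable b v)) := by
  obtain ⟨p⟩ := hab
  induction p with
  | nil => exact Or.inl (SimpleGraph.Reachable.refl _)
  | @cons a w b hadj p ih =>
    rcases hH a w hadj with h1 | h1
    · have haw := h1.reachable
      rcases ih with ih | ⟨ih1, ih2⟩
      · exact Or.inl (haw.trans ih)
      · exact Or.inr ⟨ih1.imp haw.trans haw.trans, ih2⟩
    · rw [Sym2.eq_iff] at h1
      rcases h1 with ⟨rfl, rfl⟩ | ⟨rfl, rfl⟩
      · refine Or.inr ⟨Or.inl (SimpleGraph.Reachable.refl _), ?_⟩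
        rcases ih with ih | ⟨-, ih2⟩
        · exact Or.inr ih.symm
        · exact ih2
      · refine Or.inr ⟨Or.inr (SimpleGraph.Reachable.refl _), ?_⟩
        rcases ih with ih | ⟨-, ih2⟩
        · exact Or.inl ih.symm
        · exact ih2

lemma card_connectedComponent_le_succ {V : Type*} [Finite V] {H H' : SimpleGraph V} {u v : V}
    (hle : H ≤ H') (hH : ∀ a b, H'.Adj a b → H.Adj a b ∨ s(a, b) = s(u, v)) :
    Nat.card H.ConnectedComponent ≤ Nat.card H'.ConnectedComponent + 1 := by
  classical
  rw [← Finite.card_option]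
  -- Away from the component of `u`, the map induced by `H ≤ H'` on components is injective.
  let f : H.ConnectedComponent → Option H'.ConnectedComponent := fun C =>
    if C = H.connectedComponentMk u then none else some (C.map (SimpleGraph.Hom.ofLE hle))
  refine Nat.card_le_card_of_injective f ?_
  intro C D
  induction C using SimpleGraph.ConnectedComponent.ind with | _ a
  induction D using SimpleGraph.ConnectedComponent.ind with | _ b
  intro hCD
  by_cases ha : H.connectedComponentMk a = H.connectedComponentMk u
  · by_cases hb : H.connectedComponentMk b = H.connectedComponentMk u
    · rw [ha, hb]
    · simp [f, ha, hb] at hCD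
  · by_cases hb : H.connectedComponentMk b = H.connectedComponentMk u
    · simp [f, ha, hb] at hCD
    · simp only [f, ha, hb, if_false, Option.some.injEq, SimpleGraph.ConnectedComponent.map_mk,
        SimpleGraph.ConnectedComponent.eq] at hCD
      rw [SimpleGraph.ConnectedComponent.eq] at ha hb ⊢
      rcases reachable_or_of_reachable_insert hH hCD with h1 | ⟨h1, h2⟩
      · exact h1
      · exact (h1.resolve_left ha).trans (h2.resolve_left hb).symm

lemma card_le_card_connectedComponent_add_card {V : Type*} [Fintype V] [DecidableEq V]
    (A : Finset (Sym2 V)) :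
    Fintype.card V ≤
      Nat.card (SimpleGraph.fromEdgeSet (↑A : Set (Sym2 V))).ConnectedComponent + A.card := by
  induction A using Finset.induction_on with
  | empty =>
    rw [← Nat.card_eq_fintype_card, Finset.card_empty, add_zero]
    refine Nat.card_le_card_of_injective (SimpleGraph.connectedComponentMk _) ?_
    intro a b hab
    simpa using hab
  | insert e A he ih =>
    induction e with | _ u v
    have := card_connectedComponent_le_succ (u := u) (v := v)
      (H := SimpleGraph.fromEdgeSet (↑A : Set (Sym2 V)))
      (H' := SimpleGraph.fromEdgeSet (↑(insert s(u, v) A) : Set (Sym2 V)))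
      (SimpleGraph.fromEdgeSet_mono (by simp)) (by
        intro a b hab
        simp only [SimpleGraph.fromEdgeSet_adj, Finset.coe_insert, Set.mem_insert_iff] at hab ⊢
        tauto)
    rw [Finset.card_insert_of_notMem he]
    omega

/-! ### The substitution `x = z`, `y = -z / (1 - z)` -/

lemma coeff_X_pow_mul_mk_one_pow (j r : ℕ) :
    PowerSeries.coeff r ((PowerSeries.X : PowerSeries ℤ) ^ j * PowerSeries.mk 1 ^ (j + 1)) =
      (r.choose j : ℤ) := by
  rw [PowerSeries.mk_one_pow_eq_mk_choose_add, PowerSeries.coeff_X_pow_mul']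
  split_ifs with hjr
  · rw [PowerSeries.coeff_mk, Nat.add_sub_cancel' hjr]
  · rw [Nat.choose_eq_zero_of_lt (by omega), Nat.cast_zero]

/-- The ring homomorphism `ℤ[x][y] → ℤ⟦z⟧` with `x ↦ z` and `y ↦ -z / (1 - z)`, where
`1 / (1 - z)` is the power series `PowerSeries.mk 1` with all coefficients `1`. -/
noncomputable def hyperbolaSubst : Polynomial (Polynomial ℤ) →+* PowerSeries ℤ :=
  Polynomial.eval₂RingHom (Polynomial.coeToPowerSeries.ringHom)
    (-(PowerSeries.X * PowerSeries.mk 1))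

lemma coeff_eq_brylawski_sum (T : Polynomial (Polynomial ℤ)) (h : ℕ) :
    PowerSeries.coeff h (hyperbolaSubst T * PowerSeries.mk 1) =
      ∑ i ∈ Finset.range (h + 1), ∑ j ∈ Finset.range (h - i + 1),
        ((h - i).choose j : ℤ) * (-1 : ℤ) ^ j * (T.coeff j).coeff i := by
  -- `N` is large enough for the coefficients of `T` and for the range of `j`.
  set N := T.natDegree + h + 1 with hN
  have hsub : hyperbolaSubst T * PowerSeries.mk 1 = ∑ j ∈ Finset.range N,
      (T.coeff j : PowerSeries ℤ) *
        (PowerSeries.C ((-1 : ℤ) ^ j) *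
          (PowerSeries.X ^ j * PowerSeries.mk 1 ^ (j + 1))) := by
    rw [hyperbolaSubst, Polynomial.coe_eval₂RingHom,
      Polynomial.eval₂_eq_sum_range' _ (n := N) (by omega), Finset.sum_mul]
    refine Finset.sum_congr rfl fun j _ => ?_
    rw [Polynomial.coeToPowerSeries.ringHom_apply, neg_pow, mul_pow, map_pow, map_neg, map_one]
    ring
  have hcoeff : ∀ j, PowerSeries.coeff h ((T.coeff j : PowerSeries ℤ) *
        (PowerSeries.C ((-1 : ℤ) ^ j) *
          (PowerSeries.X ^ j * PowerSeries.mk 1 ^ (j + 1)))) =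
      ∑ i ∈ Finset.range (h + 1),
        ((h - i).choose j : ℤ) * (-1 : ℤ) ^ j * (T.coeff j).coeff i := by
    intro j
    rw [PowerSeries.coeff_mul, Finset.Nat.sum_antidiagonal_eq_sum_range_succ_mk]
    refine Finset.sum_congr rfl fun i _ => ?_
    rw [PowerSeries.coeff_C_mul, coeff_X_pow_mul_mk_one_pow, Polynomial.coeff_coe]
    ring
  rw [hsub, map_sum, Finset.sum_congr rfl fun j _ => hcoeff j, Finset.sum_comm]
  refine Finset.sum_congr rfl fun i _ => ?_
  symm
  apply Finset.sum_subset
  · intro j hj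
    simp only [Finset.mem_range] at hj ⊢
    omega
  · intro j _ hj
    rw [Finset.mem_range] at hj
    rw [Nat.choose_eq_zero_of_lt (by omega)]
    simp

/-- On `(x - 1) * (y - 1) = 1`, where `a = x - 1` and `b = y - 1`, the dependence on `k` cancels. -/
lemma pow_mul_pow_of_mul_eq_one {R : Type*} [CommRing R] {a b : R} (hab : a * b = 1)
    {k c n s : ℕ} (hck : c ≤ k) (hcn : c ≤ n) (hn : n ≤ k + s) :
    a ^ (k - c) * b ^ (k + s - n) = a ^ (n - c) * b ^ s := by
  have key : ∀ r : ℕ, a ^ r * b ^ r = 1 := fun r => by rw [← mul_pow, hab, one_pow]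
  rcases le_total n k with hnk | hnk
  · obtain ⟨d, rfl⟩ := Nat.exists_eq_add_of_le hnk
    rw [show n + d - c = (n - c) + d by omega, show n + d + s - n = d + s by omega, pow_add,
      pow_add]
    linear_combination a ^ (n - c) * b ^ s * key d
  · obtain ⟨d, rfl⟩ := Nat.exists_eq_add_of_le hnk
    obtain ⟨e, rfl⟩ := Nat.exists_eq_add_of_le (show d ≤ s by omega)
    rw [show k + d - c = (k - c) + d by omega, show k + (d + e) - (k + d) = e by omega, pow_add,
      pow_add]
    linear_combination -(a ^ (k - c) * b ^ e * key d)

/-- Brylawski's identities for graphs: for `0 ≤ h < m`,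
`∑_{i=0}^{h} ∑_{j=0}^{h-i} C(h-i, j) (-1)^j t_{ij} = 0`. Here `n` is the number of
vertices, `m` the number of edges, `c` the number of connected components, and for
`A ⊆ E(G)`, `k A` is the number of connected components of the spanning subgraph
`(V, A)`. The Tutte polynomial is an element of `ℤ[x][y]`, where `x` is
`Polynomial.C Polynomial.X` and `y` is `Polynomial.X`, so the coefficient
`t i j` of `x^i y^j` is `(T.coeff j).coeff i`. -/
theorem brylawski_graph {V : Type*} [Fintype V] [DecidableEq V]
    (G : SimpleGraph V) [DecidableRel G.Adj]
    (n m c : ℕ)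
    (hn : n = Fintype.card V)
    (hm : m = G.edgeFinset.card)
    (hc : c = Nat.card G.ConnectedComponent)
    (k : Finset (Sym2 V) → ℕ)
    (hk : ∀ A : Finset (Sym2 V),
      k A = Nat.card (SimpleGraph.fromEdgeSet (↑A : Set (Sym2 V))).ConnectedComponent)
    (T : Polynomial (Polynomial ℤ))
    (hT : T = ∑ A ∈ G.edgeFinset.powerset,
      (Polynomial.C Polynomial.X - 1) ^ (k A - c) *
        (Polynomial.X - 1) ^ (k A + A.card - n))
    (t : ℕ → ℕ → ℤ)
    (ht : ∀ i j, t i j = (T.coeff j).coeff i)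
    (h : ℕ) (hhm : h < m) :
    ∑ i ∈ Finset.range (h + 1), ∑ j ∈ Finset.range (h - i + 1),
      ((h - i).choose j : ℤ) * (-1 : ℤ) ^ j * t i j = 0 := by
  have hcn : c ≤ n := by
    rw [hc, hn, ← Nat.card_eq_fintype_card]
    exact Nat.card_le_card_of_surjective G.connectedComponentMk Quot.mk_surjective
  have hkA : ∀ A ∈ G.edgeFinset.powerset, c ≤ k A ∧ n ≤ k A + A.card := by
    intro A hA
    rw [Finset.mem_powerset] at hA
    refine ⟨?_, ?_⟩
    · rw [hc, hk]
      apply SimpleGraph.ConnectedComponent.card_le_card_of_le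
      rw [← SimpleGraph.fromEdgeSet_edgeSet G]
      apply SimpleGraph.fromEdgeSet_mono
      rw [← SimpleGraph.coe_edgeFinset G]
      exact_mod_cast hA
    · rw [hn, hk]
      exact card_le_card_connectedComponent_add_card A
  set a : PowerSeries ℤ := PowerSeries.X - 1 with ha
  set y : PowerSeries ℤ := -(PowerSeries.X * PowerSeries.mk 1) with hy
  have hgeom := PowerSeries.mk_one_mul_one_sub_eq_one ℤ
  have hab : a * (y - 1) = 1 := by
    rw [ha, hy]
    linear_combination PowerSeries.X * hgeom
  have hsubst : hyperbolaSubst T = a ^ (n - c) * y ^ m := by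
    have hx : hyperbolaSubst (Polynomial.C Polynomial.X - 1) = a := by
      simp [hyperbolaSubst, ha]
    have hy1 : hyperbolaSubst (Polynomial.X - 1) = y - 1 := by
      simp [hyperbolaSubst, hy]
    rw [hT, map_sum]
    calc _ = ∑ A ∈ G.edgeFinset.powerset, a ^ (n - c) * (y - 1) ^ A.card := by
          refine Finset.sum_congr rfl fun A hA => ?_
          rw [map_mul, map_pow, map_pow, hx, hy1]
          exact pow_mul_pow_of_mul_eq_one hab (hkA A hA).1 hcn (hkA A hA).2
      _ = a ^ (n - c) * y ^ m := by
          have hbin := Finset.sum_pow_mul_eq_add_pow (y - 1) 1 G.edgeFinset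
          simp only [one_pow, mul_one, sub_add_cancel] at hbin
          rw [← Finset.mul_sum, hbin, hm]
  simp_rw [ht]
  rw [← coeff_eq_brylawski_sum, hsubst]
  have hdvd : (PowerSeries.X : PowerSeries ℤ) ^ m ∣ a ^ (n - c) * y ^ m * PowerSeries.mk 1 :=
    ((pow_dvd_pow_of_dvd ((dvd_mul_right _ _).neg_right) m).mul_left _).mul_right _
  exact PowerSeries.X_pow_dvd_iff.mp hdvd h hhm
end
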